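/- arXiv:2102.13193 — 2 statements merged into one kernel-verified Lean document; each statement's English description precedes it below -/
import Mathlib

section
/- Let G be a finite connected simple graph that admits a star spanning tree T_s with center v. Then for every spanning tree T of G that differs from T_s by exactly one edge replacement (i.e., T = (T_s - {e}) ∪ {e'} for some edge e of T_s and some edge e' of G not in T_s), one has ∩(T_s) ≤ ∩(T). In other words, T_s is a local minimum with respect to the tree intersection number in the spanning tree graph of G. -/
open SimpleGraph

/-- The set of edges lying on some path (in a tree: the unique path) between `x` and `y`
in the graph `T`. -/
def pathEdges {V : Type*} (T : SimpleGraph V) (x y : V) : Set (Sym2 V) :=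
  {f | ∃ p : T.Walk x y, p.IsPath ∧ f ∈ p.edges}

/-- The edge set of the tree-cycle induced (in the spanning tree `T`) by the cycle-edge `e`:
the edge `e` itself together with the edges of the (unique) path in `T` between
the endpoints of `e`. -/
def cycEdges {V : Type*} (T : SimpleGraph V) (e : Sym2 V) : Set (Sym2 V) :=
  insert e {f | ∃ x y, e = s(x, y) ∧ f ∈ pathEdges T x y}

/-- The vertex set of the tree-cycle induced (in the spanning tree `T`) by the
cycle-edge `e`. -/
def cycVerts {V : Type*} (T : SimpleGraph V) (e : Sym2 V) : Set V :=
  {v | ∃ x y, e = s(x, y) ∧ ∃ p : T.Walk x y, p.IsPath ∧ v ∈ p.support}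

/-- Two tree-cycles (induced by the cycle-edges `e` and `f`) have non-empty intersection:
some edge of `T` belongs to both of them. -/
def cyclesIntersect {V : Type*} (T : SimpleGraph V) (e f : Sym2 V) : Prop :=
  (cycEdges T e ∩ cycEdges T f ∩ T.edgeSet).Nonempty

/-- The cycle intersection number `∩_T(c)` of the tree-cycle `c` induced by the
cycle-edge `e`: the number of tree-cycles distinct from `c` whose intersection with `c`
is non-empty. -/
noncomputable def cycleInterNum {V : Type*} (G T : SimpleGraph V) (e : Sym2 V) : ℕ :=
  {f | f ∈ G.edgeSet \ T.edgeSet ∧ f ≠ e ∧ cyclesIntersect T e f}.ncard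

/-- The tree intersection number `∩_G(T)`: the number of unordered pairs of distinct
tree-cycles of `T` whose intersection is non-empty. -/
noncomputable def treeInterNum {V : Type*} (G T : SimpleGraph V) : ℕ :=
  {p : Sym2 (Sym2 V) | ∃ e f : Sym2 V, p = s(e, f) ∧ e ≠ f ∧
    e ∈ G.edgeSet \ T.edgeSet ∧ f ∈ G.edgeSet \ T.edgeSet ∧ cyclesIntersect T e f}.ncard

/-- `T` is a star spanning tree of `G` with center `v`. -/
def IsStarSpanningTree {V : Type*} (G T : SimpleGraph V) (v : V) : Prop :=
  T ≤ G ∧ T.IsTree ∧ ∀ u, u ≠ v → T.Adj v u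

/-- `closest-point-set(w, c)`: the set of vertices outside the tree-cycle `c` (induced by
the cycle-edge `e`) whose closest point on `c` (with respect to distance in `T`) is `w`. -/
def closestPointSet {V : Type*} (T : SimpleGraph V) (e : Sym2 V) (w : V) : Set V :=
  {v | v ∉ cycVerts T e ∧ ∀ u ∈ cycVerts T e, T.dist v w ≤ T.dist v u}

/-!
Re-hanging the leaf `a` of the star centred at `v` on another leaf `b` turns the tree-cycle of
`ab` into a tree-cycle of `va`, so exchanging `ab` and `va` maps the cycle-edges of the old tree
injectively to those of the new one. Two tree-cycles of the star meet only if their cycle-edges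
share an endpoint `w ≠ v`. In the new tree, rooted at `v`, the edge from `w` to its parent then
lies on both of the corresponding tree-cycles, because each of the two exchanged cycle-edges joins
a descendant of `w` to a non-descendant.
-/

theorem mapsTo_swap_diff_of_exchange {α : Type*} [DecidableEq α] {A S : Set α} {e e' : α}
    (heA : e ∈ A) (heS : e ∈ S) (he' : e' ∉ S) :
    Set.MapsTo (Equiv.swap e' e) (A \ S) (A \ ((S \ {e}) ∪ {e'})) := by
  rintro f ⟨hfA, hfS⟩
  by_cases hf : f = e'
  · subst hf
    rw [Equiv.swap_apply_left]
    exact ⟨heA, by simp [ne_of_mem_of_not_mem heS he']⟩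
  · rw [Equiv.swap_apply_of_ne_of_ne hf (ne_of_mem_of_not_mem heS hfS).symm]
    exact ⟨hfA, by simp [hfS, hf]⟩

section TreeCycles

variable {V W : Type*} {T : SimpleGraph V}

theorem mem_cycEdges_of_forall_boundary (hT : T.Preconnected) {S : Set V} {h : Sym2 V}
    (hS : ∀ u ∈ S, ∀ w ∉ S, T.Adj u w → s(u, w) = h) {x y : V} (hx : x ∈ S) (hy : y ∉ S) :
    h ∈ cycEdges T s(x, y) := by
  obtain ⟨p, hp⟩ := (hT x y).exists_isPath
  obtain ⟨d, hd, hdS, hdS'⟩ := p.exists_boundary_dart S hx hy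
  rw [← hS d.fst hdS d.snd hdS' d.adj]
  exact Or.inr ⟨x, y, rfl, p, hp, List.mem_map_of_mem hd⟩

theorem cycEdges_eq_insert_edges (hT : T.IsAcyclic) {x y : V} {p : T.Walk x y} (hp : p.IsPath) :
    cycEdges T s(x, y) = insert s(x, y) {f | f ∈ p.edges} := by
  have := hT.subsingleton_path x y
  have edges_eq {q : T.Walk x y} (hq : q.IsPath) : q.edges = p.edges :=
    congrArg (fun r : T.Path x y ↦ r.1.edges) (Subsingleton.elim ⟨q, hq⟩ ⟨p, hp⟩)
  refine congrArg (insert s(x, y)) (Set.ext fun f ↦ ⟨?_, fun hf ↦ ⟨x, y, rfl, p, hp, hf⟩⟩)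
  rintro ⟨x', y', hxy, q, hq, hf⟩
  obtain ⟨rfl, rfl⟩ | ⟨rfl, rfl⟩ := Sym2.eq_iff.mp hxy
  · exact edges_eq hq ▸ hf
  · have hf' : f ∈ q.reverse.edges := by simpa only [Walk.edges_reverse, List.mem_reverse] using hf
    exact edges_eq hq.reverse ▸ hf'

/-- The unordered pairs of distinct cycle-edges of `T` whose tree-cycles intersect. Their number
is the tree intersection number; as a set they can also be compared when `G` is infinite. -/
def intersectingPairs (G T : SimpleGraph V) : Set (Sym2 (Sym2 V)) :=
  {p | ∃ e f : Sym2 V, p = s(e, f) ∧ e ≠ f ∧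
    e ∈ G.edgeSet \ T.edgeSet ∧ f ∈ G.edgeSet \ T.edgeSet ∧ cyclesIntersect T e f}

theorem encard_intersectingPairs_le_of_injective {G : SimpleGraph V} {G' T' : SimpleGraph W}
    {φ : Sym2 V → Sym2 W} (hφ : φ.Injective)
    (hmaps : Set.MapsTo φ (G.edgeSet \ T.edgeSet) (G'.edgeSet \ T'.edgeSet))
    (hinter : ∀ f ∈ G.edgeSet \ T.edgeSet, ∀ g ∈ G.edgeSet \ T.edgeSet,
      cyclesIntersect T f g → cyclesIntersect T' (φ f) (φ g)) :
    (intersectingPairs G T).encard ≤ (intersectingPairs G' T').encard := by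
  refine Set.encard_le_encard_of_injOn ?_ (Sym2.map.injective hφ).injOn
  rintro _ ⟨f, g, rfl, hfg, hf, hg, hcross⟩
  exact ⟨φ f, φ g, Sym2.map_mk .., hφ.ne hfg, hmaps hf, hmaps hg, hinter f hf g hg hcross⟩

end TreeCycles

section Star

variable {V : Type*} {v : V}

theorem IsStarSpanningTree.eq_starGraph {G T : SimpleGraph V} (h : IsStarSpanningTree G T v) :
    T = starGraph v := by
  have hle : starGraph v ≤ T := by
    intro x y hxy
    obtain ⟨hne, rfl | rfl⟩ := starGraph_adj.mp hxy
    · exact h.2.2 y hne.symm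
    · exact (h.2.2 x hne).symm
  exact ((isTree_iff_minimal_connected.mp h.2.1).eq_of_le (connected_starGraph v) hle).symm

theorem mem_edgeSet_starGraph_iff {f : Sym2 V} :
    f ∈ (starGraph v).edgeSet ↔ ¬ f.IsDiag ∧ v ∈ f := by
  induction f with | _ x y
  simp [eq_comm (a := v)]

theorem cycEdges_starGraph {x y : V} (hx : x ≠ v) (hy : y ≠ v) (hxy : x ≠ y) :
    cycEdges (starGraph v) s(x, y) = {s(x, y), s(v, x), s(v, y)} := by
  have hpath : (Walk.cons (starGraph_center_adj' hx.symm)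
      (Walk.cons (starGraph_center_adj hy.symm) Walk.nil)).IsPath := by
    simp [Walk.cons_isPath_iff, hx, hy.symm, hxy]
  rw [cycEdges_eq_insert_edges (isAcyclic_starGraph v) hpath, Sym2.eq_swap (a := v) (b := x)]
  ext f
  simp

theorem exists_mem_eq_of_mem_cycEdges_starGraph {f h : Sym2 V} (hdiag : ¬ f.IsDiag) (hf : v ∉ f)
    (hh : h ∈ (starGraph v).edgeSet) (hfh : h ∈ cycEdges (starGraph v) f) :
    ∃ w ∈ f, h = s(v, w) := by
  induction f with | _ x y
  rw [cycEdges_starGraph (ne_of_mem_of_not_mem (Sym2.mem_mk_left x y) hf)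
    (ne_of_mem_of_not_mem (Sym2.mem_mk_right x y) hf) hdiag] at hfh
  obtain rfl | rfl | rfl := hfh
  · exact absurd (mem_edgeSet_starGraph_iff.mp hh).2 hf
  · exact ⟨x, Sym2.mem_mk_left x y, rfl⟩
  · exact ⟨y, Sym2.mem_mk_right x y, rfl⟩

theorem exists_common_mem_of_cyclesIntersect_starGraph {f g : Sym2 V}
    (hfd : ¬ f.IsDiag) (hf : v ∉ f) (hgd : ¬ g.IsDiag) (hg : v ∉ g)
    (h : cyclesIntersect (starGraph v) f g) : ∃ w, w ∈ f ∧ w ∈ g := by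
  obtain ⟨c, ⟨hcf, hcg⟩, hc⟩ := h
  obtain ⟨w, hwf, rfl⟩ := exists_mem_eq_of_mem_cycEdges_starGraph hfd hf hc hcf
  obtain ⟨z, hzg, hwz⟩ := exists_mem_eq_of_mem_cycEdges_starGraph hgd hg hc hcg
  exact ⟨w, hwf, Sym2.congr_right.mp hwz ▸ hzg⟩

end Star

section RehungStar

variable {V : Type*} {v a b w : V}

/-- The graph obtained from the star centred at `v` by detaching the leaf `a` from `v` and hanging
it on `b`: the result of a single edge replacement. -/
def rehungStar (v a b : V) : SimpleGraph V :=
  (starGraph v).deleteEdges {s(v, a)} ⊔ edge a b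

theorem rehungStar_adj {x y : V} : (rehungStar v a b).Adj x y ↔
    ((starGraph v).Adj x y ∧ s(x, y) ≠ s(v, a)) ∨ (x = a ∧ y = b ∨ x = b ∧ y = a) ∧ x ≠ y := by
  rw [rehungStar, sup_adj, deleteEdges_adj, Set.mem_singleton_iff, edge_adj]

theorem edgeSet_rehungStar (hab : a ≠ b) :
    (rehungStar v a b).edgeSet = ((starGraph v).edgeSet \ {s(v, a)}) ∪ {s(a, b)} := by
  simp [rehungStar, edgeSet_edge_of_ne hab]

theorem exists_eq_rehungStar {T : SimpleGraph V} (hT : T.Preconnected) (hav : a ≠ v)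
    {e' : Sym2 V} (hdiag : ¬ e'.IsDiag)
    (hrepl : T.edgeSet = ((starGraph v).edgeSet \ {s(v, a)}) ∪ {e'}) :
    ∃ b, a ≠ b ∧ e' = s(a, b) ∧ T = rehungStar v a b := by
  have hae' : a ∈ e' := by
    have : Nontrivial V := ⟨a, v, hav⟩
    obtain ⟨u, hau⟩ := hT.exists_adj_of_nontrivial a
    have hmem : s(a, u) ∈ ((starGraph v).edgeSet \ {s(v, a)}) ∪ {e'} := hrepl ▸ hau
    obtain ⟨hstar, hne⟩ | rfl := hmem
    · obtain rfl : u = v := (starGraph_adj.mp hstar).2.resolve_left hav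
      exact absurd Sym2.eq_swap hne
    · exact Sym2.mem_mk_left a u
  obtain ⟨b, rfl⟩ := hae'
  exact ⟨b, hdiag, rfl, by rw [← edgeSet_inj, hrepl, edgeSet_rehungStar hdiag]⟩

/-- The descendants of `w ≠ v`, including `w` itself, in `rehungStar v a b` rooted at `v`: only `b`
has a descendant other than itself. -/
def descendants (a b w : V) : Set V :=
  {x | x = w ∨ x = a ∧ w = b}

variable [DecidableEq V]

/-- The edge from `w ≠ v` to its parent in `rehungStar v a b` rooted at `v`. -/
def parentEdge (v a b w : V) : Sym2 V :=
  if w = a then s(a, b) else s(v, w)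

theorem parentEdge_mem_edgeSet_rehungStar (hab : a ≠ b) (hw : w ≠ v) :
    parentEdge v a b w ∈ (rehungStar v a b).edgeSet := by
  rw [edgeSet_rehungStar hab]
  by_cases hwa : w = a
  · simp [parentEdge, hwa]
  · have hne : s(v, w) ≠ s(v, a) := fun h ↦ hwa (Sym2.congr_right.mp h)
    rw [parentEdge, if_neg hwa]
    exact Or.inl ⟨starGraph_center_adj hw.symm, hne⟩

theorem eq_parentEdge_of_adj_of_mem_descendants (hav : a ≠ v) (hw : w ≠ v) {x y : V}
    (hx : x ∈ descendants a b w) (hy : y ∉ descendants a b w)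
    (hxy : (rehungStar v a b).Adj x y) : s(x, y) = parentEdge v a b w := by
  obtain ⟨hyw, hyab⟩ := not_or.mp hy
  obtain ⟨hstar, hne⟩ | ⟨⟨rfl, rfl⟩ | ⟨rfl, rfl⟩, -⟩ := rehungStar_adj.mp hxy
  · have hxv : x ≠ v := by
      rintro rfl
      exact hx.elim hw.symm fun h ↦ hav.symm h.1
    obtain rfl : y = v := (starGraph_adj.mp hstar).2.resolve_left hxv
    have hxa : x ≠ a := by
      rintro rfl
      exact hne Sym2.eq_swap
    obtain rfl : x = w := hx.resolve_right fun h ↦ hxa h.1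
    rw [parentEdge, if_neg hxa, Sym2.eq_swap]
  · obtain rfl : x = w := hx.resolve_right fun h ↦ hyw h.2.symm
    rw [parentEdge, if_pos rfl]
  · obtain rfl | ⟨-, rfl⟩ := hx <;> exact absurd ⟨rfl, rfl⟩ hyab

theorem parentEdge_mem_cycEdges_rehungStar (hT : (rehungStar v a b).Preconnected) (hav : a ≠ v)
    (hw : w ≠ v) {x y : V} (hx : x ∈ descendants a b w) (hy : y ∉ descendants a b w) :
    parentEdge v a b w ∈ cycEdges (rehungStar v a b) s(x, y) :=
  mem_cycEdges_of_forall_boundary hT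
    (fun _ hu _ hz ↦ eq_parentEdge_of_adj_of_mem_descendants hav hw hu hz) hx hy

theorem parentEdge_mem_cycEdges_swap (hT : (rehungStar v a b).Preconnected) (hav : a ≠ v)
    {f : Sym2 V} (hdiag : ¬ f.IsDiag) (hf : v ∉ f) (hwf : w ∈ f) :
    parentEdge v a b w ∈ cycEdges (rehungStar v a b) (Equiv.swap s(a, b) s(v, a) f) := by
  have hwv : w ≠ v := ne_of_mem_of_not_mem hwf hf
  by_cases hfab : f = s(a, b)
  · subst hfab
    rw [Equiv.swap_apply_left, Sym2.eq_swap]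
    refine parentEdge_mem_cycEdges_rehungStar hT hav hwv ?_ ?_
    · simpa [descendants, eq_comm] using hwf
    · simp [descendants, hwv.symm, hav.symm]
  · have hfva : f ≠ s(v, a) := (ne_of_mem_of_not_mem' (Sym2.mem_mk_left v a) hf).symm
    rw [Equiv.swap_apply_of_ne_of_ne hfab hfva]
    obtain ⟨y, rfl⟩ := hwf
    refine parentEdge_mem_cycEdges_rehungStar hT hav hwv (Or.inl rfl) ?_
    rintro (rfl | ⟨rfl, rfl⟩)
    · exact hdiag rfl
    · exact hfab Sym2.eq_swap

theorem cyclesIntersect_rehungStar_swap (hT : (rehungStar v a b).Preconnected) (hab : a ≠ b)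
    (hav : a ≠ v) {f g : Sym2 V} (hfd : ¬ f.IsDiag) (hf : v ∉ f) (hgd : ¬ g.IsDiag) (hg : v ∉ g)
    (h : cyclesIntersect (starGraph v) f g) :
    cyclesIntersect (rehungStar v a b) (Equiv.swap s(a, b) s(v, a) f)
      (Equiv.swap s(a, b) s(v, a) g) := by
  obtain ⟨w, hwf, hwg⟩ := exists_common_mem_of_cyclesIntersect_starGraph hfd hf hgd hg h
  exact ⟨parentEdge v a b w, ⟨parentEdge_mem_cycEdges_swap hT hav hfd hf hwf,
    parentEdge_mem_cycEdges_swap hT hav hgd hg hwg⟩,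
    parentEdge_mem_edgeSet_rehungStar hab (ne_of_mem_of_not_mem hwf hf)⟩

end RehungStar

theorem stmt_13_general {V : Type*} {G Ts T : SimpleGraph V} {v : V}
    (hTs : IsStarSpanningTree G Ts v) (hT : T.Connected) {e e' : Sym2 V}
    (he : e ∈ Ts.edgeSet) (he' : e' ∈ G.edgeSet \ Ts.edgeSet)
    (hrepl : T.edgeSet = (Ts.edgeSet \ {e}) ∪ {e'}) :
    (intersectingPairs G Ts).encard ≤ (intersectingPairs G T).encard := by
  classical
  obtain rfl := hTs.eq_starGraph
  have heG : e ∈ G.edgeSet := edgeSet_mono hTs.1 he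
  obtain ⟨hediag, a, rfl⟩ := mem_edgeSet_starGraph_iff.mp he
  have hav : a ≠ v := Ne.symm hediag
  obtain ⟨b, hab, rfl, rfl⟩ :=
    exists_eq_rehungStar hT.preconnected hav (G.not_isDiag_of_mem_edgeSet he'.1) hrepl
  refine encard_intersectingPairs_le_of_injective (Equiv.swap s(a, b) s(v, a)).injective ?_ ?_
  · rw [hrepl]
    exact mapsTo_swap_diff_of_exchange heG he he'.2
  · have isCycleEdge {f : Sym2 V} (hf : f ∈ G.edgeSet \ (starGraph v).edgeSet) :
        ¬ f.IsDiag ∧ v ∉ f :=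
      have hdiag := G.not_isDiag_of_mem_edgeSet hf.1
      ⟨hdiag, fun hv ↦ hf.2 (mem_edgeSet_starGraph_iff.mpr ⟨hdiag, hv⟩)⟩
    intro f hf g hg
    exact cyclesIntersect_rehungStar_swap hT.preconnected hab hav
      (isCycleEdge hf).1 (isCycleEdge hf).2 (isCycleEdge hg).1 (isCycleEdge hg).2

/-- If a connected graph `G` admits a star spanning tree `T_s` with center
`v`, then for every spanning tree `T` of `G` obtained from `T_s` by exactly one edge
replacement (`T = (T_s - {e}) ∪ {e'}` with `e` an edge of `T_s` and `e'` an edge of `G`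
not in `T_s`), one has `∩(T_s) ≤ ∩(T)`: `T_s` is a local minimum for the tree
intersection number in the spanning tree graph of `G`. -/
theorem stmt_13 {V : Type*} [Fintype V] (G Ts T : SimpleGraph V)
    (hG : G.Connected) (v : V) (hTs : IsStarSpanningTree G Ts v)
    (hle : T ≤ G) (hT : T.IsTree)
    (e e' : Sym2 V) (he : e ∈ Ts.edgeSet) (he' : e' ∈ G.edgeSet \ Ts.edgeSet)
    (hrepl : T.edgeSet = (Ts.edgeSet \ {e}) ∪ {e'}) :
    treeInterNum G Ts ≤ treeInterNum G T :=
  ENat.toNat_le_toNat (stmt_13_general hTs hT.connected he he' hrepl)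
    (Set.encard_ne_top_iff.mpr (Set.toFinite _))
end

section
/- There is no map f from the set of all finite trees to the real numbers such that for every finite connected simple graph G and all spanning trees T₁, T₂ of G, one has f(T₁) ≤ f(T₂) if and only if ∩_G(T₁) ≤ ∩_G(T₂). That is, no intrinsic tree invariant is positively correlated with the tree intersection number for every graph. -/
open SimpleGraph

/-!
It suffices to find one graph with two isomorphic spanning trees of different tree intersection
number. All spanning trees of a graph have the same number `k` of cycle-edges, so `∩_G(T)` is
`k.choose 2` if the tree-cycles of `T` pairwise intersect, and smaller if some two of them do not.
In the fan with hub `0` over the path `1-2-3-4`, every cycle-edge of the Hamiltonian path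
`0-1-2-3-4` starts at `0`, so all its tree-cycles contain the edge `01`. For the Hamiltonian path
`2-1-0-3-4`, the tree-cycles of `02` and `04` meet only in the vertex `0`.
-/

/-- The edge `g` of `T` is the only edge of `T` joining `S` to its complement. Such a pair decides,
for any two vertices, whether the paths between them use `g`. -/
structure IsSoleCutEdge {V : Type*} (T : SimpleGraph V) (S : Set V) (g : Sym2 V) : Prop where
  mem_edgeSet : g ∈ T.edgeSet
  eq_iff : ∀ ⦃u v⦄, T.Adj u v → (s(u, v) = g ↔ ¬(u ∈ S ↔ v ∈ S))

/-- The fan over a linear order: its Hasse path, with the least element as a hub joined to every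
other element. It supplies the graph in which tree intersection numbers are compared. -/
def fanGraph (α : Type*) [LinearOrder α] [OrderBot α] : SimpleGraph α :=
  hasse α ⊔ starGraph ⊥

section TreeCycles

variable {V : Type*} {T : SimpleGraph V} {S : Set V} {g : Sym2 V} {x y : V}

-- A trail uses `g` at most once, and only `g` takes it from one side to the other.
lemma IsSoleCutEdge.mem_edges_iff (h : IsSoleCutEdge T S g) {p : T.Walk x y} (hp : p.IsTrail) :
    g ∈ p.edges ↔ ¬(x ∈ S ↔ y ∈ S) := by
  induction p with
  | nil => simp
  | cons hadj p ih =>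
    obtain ⟨hp, hfresh⟩ := (Walk.isTrail_cons hadj p).1 hp
    rw [Walk.edges_cons, List.mem_cons]
    grind [h.eq_iff hadj, ih hp]

lemma isAcyclic_of_forall_isSoleCutEdge (h : ∀ g ∈ T.edgeSet, ∃ S, IsSoleCutEdge T S g) :
    T.IsAcyclic := by
  intro v c hc
  obtain ⟨g, hg⟩ := List.exists_mem_of_ne_nil _ (Walk.edges_eq_nil.not.2 hc.not_nil)
  obtain ⟨S, hS⟩ := h g (c.edges_subset_edgeSet hg)
  exact (hS.mem_edges_iff hc.isTrail).1 hg Iff.rfl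

lemma cyclesIntersect_comm {e f : Sym2 V} : cyclesIntersect T e f ↔ cyclesIntersect T f e := by
  rw [cyclesIntersect, cyclesIntersect, Set.inter_comm (cycEdges T e)]

lemma pathEdges_comm : pathEdges T x y = pathEdges T y x := by
  have hsub (a b : V) : pathEdges T a b ⊆ pathEdges T b a := fun f ⟨p, hp, hf⟩ ↦
    ⟨p.reverse, hp.reverse, by simpa using hf⟩
  exact (hsub x y).antisymm (hsub y x)

lemma mem_cycEdges_iff_mem_pathEdges (hg : g ∈ T.edgeSet) :
    g ∈ cycEdges T s(x, y) ↔ g ∈ pathEdges T x y := by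
  constructor
  · rintro (rfl | ⟨a, b, hab, hmem⟩)
    · have hadj : T.Adj x y := hg
      exact ⟨hadj.toWalk, .of_adj hadj, by simp⟩
    · rcases Sym2.eq_iff.1 hab with ⟨rfl, rfl⟩ | ⟨rfl, rfl⟩
      · exact hmem
      · rwa [pathEdges_comm]
  · exact fun hmem ↦ Or.inr ⟨x, y, rfl, hmem⟩

lemma IsSoleCutEdge.mem_cycEdges_iff (h : IsSoleCutEdge T S g) (hT : T.Preconnected) :
    g ∈ cycEdges T s(x, y) ↔ ¬(x ∈ S ↔ y ∈ S) := by
  rw [mem_cycEdges_iff_mem_pathEdges h.mem_edgeSet]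
  constructor
  · rintro ⟨p, hp, hg⟩
    exact (h.mem_edges_iff hp.isTrail).1 hg
  · intro hsep
    obtain ⟨p, hp⟩ := (hT x y).exists_isPath
    exact ⟨p, hp, (h.mem_edges_iff hp.isTrail).2 hsep⟩

end TreeCycles

section HassePaths

variable {V α : Type*} [LinearOrder α] {T : SimpleGraph V} {x y z w : V}

lemma isSoleCutEdge_of_covBy (φ : T ≃g hasse α) {u v : V} (huv : φ u ⋖ φ v) :
    IsSoleCutEdge T {t | φ t ≤ φ u} s(u, v) where
  mem_edgeSet := φ.map_adj_iff.1 (Or.inl huv)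
  eq_iff := by
    have hcut {a b : V} (hab : φ a ⋖ φ b) : φ a ≤ φ u ∧ φ u < φ b ↔ a = u ∧ b = v := by
      constructor
      · rintro ⟨hau, hub⟩
        have ha : φ a = φ u := hau.eq_of_not_lt fun h ↦ hab.2 h hub
        exact ⟨φ.injective ha, φ.injective (hab.unique_right (ha ▸ huv))⟩
      · rintro ⟨rfl, rfl⟩
        exact ⟨le_rfl, huv.lt⟩
    intro a b hab
    rw [Sym2.eq_iff, Set.mem_ofPred_eq, Set.mem_ofPred_eq]
    rcases φ.map_adj_iff.2 hab with hab | hba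
    · grind [hcut hab, hab.lt, huv.lt]
    · grind [hcut hba, hba.lt, huv.lt]

lemma exists_covBy_of_mem_edgeSet (φ : T ≃g hasse α) {g : Sym2 V} (hg : g ∈ T.edgeSet) :
    ∃ u v, φ u ⋖ φ v ∧ g = s(u, v) := by
  induction g with
  | h u v =>
    rcases φ.map_adj_iff.2 hg with huv | hvu
    · exact ⟨u, v, huv, rfl⟩
    · exact ⟨v, u, hvu, Sym2.eq_swap⟩

lemma isAcyclic_of_iso_hasse (φ : T ≃g hasse α) : T.IsAcyclic := by
  refine isAcyclic_of_forall_isSoleCutEdge fun g hg ↦ ?_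
  obtain ⟨u, v, huv, rfl⟩ := exists_covBy_of_mem_edgeSet φ hg
  exact ⟨_, isSoleCutEdge_of_covBy φ huv⟩

variable [SuccOrder α] [IsSuccArchimedean α]

lemma isTree_hasse [Nonempty α] : (hasse α).IsTree :=
  ⟨⟨hasse_preconnected_of_succ α⟩, isAcyclic_of_iso_hasse Iso.refl⟩

-- In a path, the tree-cycle of a chord runs over the interval between its endpoints.
lemma cyclesIntersect_iff_of_iso_hasse (φ : T ≃g hasse α) :
    cyclesIntersect T s(x, y) s(z, w) ↔
      (φ x ⊓ φ y) ⊔ (φ z ⊓ φ w) < (φ x ⊔ φ y) ⊓ (φ z ⊔ φ w) := by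
  have hT : T.Preconnected := φ.preconnected_iff.2 (hasse_preconnected_of_succ α)
  constructor
  · rintro ⟨g, ⟨hxy, hzw⟩, hg⟩
    obtain ⟨u, v, huv, rfl⟩ := exists_covBy_of_mem_edgeSet φ hg
    have hcut := isSoleCutEdge_of_covBy φ huv
    rw [hcut.mem_cycEdges_iff hT] at hxy hzw
    grind
  · intro hlt
    let a := (φ x ⊓ φ y) ⊔ (φ z ⊓ φ w)
    have hcov : φ (φ.symm a) ⋖ φ (φ.symm (Order.succ a)) := by
      simpa using Order.covBy_succ_of_not_isMax hlt.not_isMax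
    have hcut := isSoleCutEdge_of_covBy φ hcov
    refine ⟨_, ⟨(hcut.mem_cycEdges_iff hT).2 ?_, (hcut.mem_cycEdges_iff hT).2 ?_⟩,
      hcut.mem_edgeSet⟩ <;>
    · simp only [Set.mem_ofPred_eq, φ.apply_symm_apply]
      grind

lemma cyclesIntersect_hasse_of_mem_fanGraph_sdiff [OrderBot α] {e f : Sym2 α}
    (he : e ∈ (fanGraph α).edgeSet \ (hasse α).edgeSet)
    (hf : f ∈ (fanGraph α).edgeSet \ (hasse α).edgeSet) : cyclesIntersect (hasse α) e f := by
  have exists_spoke {e : Sym2 α} (he : e ∈ (fanGraph α).edgeSet \ (hasse α).edgeSet) :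
      ∃ y, ⊥ < y ∧ e = s(⊥, y) := by
    induction e with
    | h a b =>
      obtain ⟨hne, rfl | rfl⟩ := starGraph_adj.1 (he.1.resolve_left he.2)
      · exact ⟨b, bot_lt_iff_ne_bot.2 hne.symm, rfl⟩
      · exact ⟨a, bot_lt_iff_ne_bot.2 hne, Sym2.eq_swap⟩
  obtain ⟨y, hy, rfl⟩ := exists_spoke he
  obtain ⟨z, hz, rfl⟩ := exists_spoke hf
  rw [cyclesIntersect_iff_of_iso_hasse Iso.refl]
  simpa using ⟨hy, hz⟩

end HassePaths

section Counting

lemma ncard_setOf_pairs {β : Type*} {C : Set β} (hC : C.Finite) :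
    {p : Sym2 β | ∃ e f, p = s(e, f) ∧ e ≠ f ∧ e ∈ C ∧ f ∈ C}.ncard = C.ncard.choose 2 := by
  classical
  lift C to Finset β using hC
  rw [Set.ncard_coe_finset, ← Sym2.card_image_offDiag, ← Set.ncard_coe_finset]
  congr 1
  ext p
  simp only [Set.mem_ofPred_eq, Finset.mem_coe, Finset.mem_image, Finset.mem_offDiag, Prod.exists]
  grind

variable {V : Type*} [Finite V] {G T T₁ T₂ : SimpleGraph V}

lemma treeInterNum_eq_choose (h : (G.edgeSet \ T.edgeSet).Pairwise (cyclesIntersect T)) :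
    treeInterNum G T = (G.edgeSet \ T.edgeSet).ncard.choose 2 := by
  rw [← ncard_setOf_pairs (Set.toFinite _), treeInterNum]
  congr! 3 with p
  constructor
  · rintro ⟨e, f, hp, hne, he, hf, -⟩
    exact ⟨e, f, hp, hne, he, hf⟩
  · rintro ⟨e, f, hp, hne, he, hf⟩
    exact ⟨e, f, hp, hne, he, hf, h he hf hne⟩

lemma treeInterNum_lt_choose {e f : Sym2 V} (he : e ∈ G.edgeSet \ T.edgeSet)
    (hf : f ∈ G.edgeSet \ T.edgeSet) (hne : e ≠ f) (hef : ¬cyclesIntersect T e f) :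
    treeInterNum G T < (G.edgeSet \ T.edgeSet).ncard.choose 2 := by
  rw [← ncard_setOf_pairs (Set.toFinite _), treeInterNum]
  refine Set.ncard_lt_ncard (Set.ssubset_iff_exists.2 ⟨?_, s(e, f), ⟨e, f, rfl, hne, he, hf⟩, ?_⟩)
  · rintro p ⟨a, b, hp, hab, ha, hb, -⟩
    exact ⟨a, b, hp, hab, ha, hb⟩
  · rintro ⟨a, b, hp, -, -, -, hinter⟩
    rcases Sym2.eq_iff.1 hp with ⟨rfl, rfl⟩ | ⟨rfl, rfl⟩
    · exact hef hinter
    · exact hef (cyclesIntersect_comm.1 hinter)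

lemma ncard_edgeSet_sdiff_add_card (hle : T ≤ G) (hT : T.IsTree) :
    (G.edgeSet \ T.edgeSet).ncard + Nat.card V = G.edgeSet.ncard + 1 := by
  have hcard := (isTree_iff_connected_and_card.1 hT).2
  rw [Nat.card_coe_set_eq] at hcard
  rw [← hcard, ← add_assoc, Set.ncard_sdiff_add_ncard_of_subset (edgeSet_mono hle)]

lemma treeInterNum_lt_treeInterNum (hle₁ : T₁ ≤ G) (hle₂ : T₂ ≤ G) (hT₁ : T₁.IsTree)
    (hT₂ : T₂.IsTree) {e f : Sym2 V} (he : e ∈ G.edgeSet \ T₁.edgeSet)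
    (hf : f ∈ G.edgeSet \ T₁.edgeSet) (hne : e ≠ f) (hef : ¬cyclesIntersect T₁ e f)
    (hpairwise : (G.edgeSet \ T₂.edgeSet).Pairwise (cyclesIntersect T₂)) :
    treeInterNum G T₁ < treeInterNum G T₂ := by
  have hcard : (G.edgeSet \ T₁.edgeSet).ncard = (G.edgeSet \ T₂.edgeSet).ncard := by
    have h₁ := ncard_edgeSet_sdiff_add_card hle₁ hT₁
    have h₂ := ncard_edgeSet_sdiff_add_card hle₂ hT₂
    lia
  calc
    treeInterNum G T₁ < (G.edgeSet \ T₁.edgeSet).ncard.choose 2 :=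
      treeInterNum_lt_choose he hf hne hef
    _ = (G.edgeSet \ T₂.edgeSet).ncard.choose 2 := by rw [hcard]
    _ = treeInterNum G T₂ := (treeInterNum_eq_choose hpairwise).symm

end Counting

lemma exists_iso_spanning_trees_treeInterNum_lt :
    ∃ G T₁ T₂ : SimpleGraph (Fin 5), T₁ ≤ G ∧ T₂ ≤ G ∧ T₁.IsTree ∧ T₂.IsTree ∧
      Nonempty (T₁ ≃g T₂) ∧ treeInterNum G T₁ < treeInterNum G T₂ := by
  let G := fanGraph (Fin 5)
  let T₁ := (pathGraph 5).comap (Equiv.swap 0 2)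
  let T₂ := pathGraph 5
  let φ : T₁ ≃g T₂ := Iso.comap (Equiv.swap 0 2) (pathGraph 5)
  have adj_G (u v : Fin 5) : G.Adj u v ↔
      (u.val + 1 = v.val ∨ v.val + 1 = u.val) ∨ u ≠ v ∧ (u = 0 ∨ v = 0) :=
    or_congr pathGraph_adj starGraph_adj
  have adj_T₁ (u v : Fin 5) : T₁.Adj u v ↔
      (Equiv.swap 0 2 u).val + 1 = (Equiv.swap 0 2 v).val ∨
        (Equiv.swap 0 2 v).val + 1 = (Equiv.swap 0 2 u).val :=
    pathGraph_adj
  have hle₁ : T₁ ≤ G := by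
    intro u v
    rw [adj_T₁, adj_G]
    decide +revert
  have hle₂ : T₂ ≤ G := le_sup_left
  have htree₂ : T₂.IsTree := isTree_hasse
  have htree₁ : T₁.IsTree := φ.isTree_iff.2 htree₂
  have chord₂ : s(0, 2) ∈ G.edgeSet \ T₁.edgeSet := by
    simp only [Set.mem_sdiff, mem_edgeSet, adj_G, adj_T₁]
    decide
  have chord₄ : s(0, 4) ∈ G.edgeSet \ T₁.edgeSet := by
    simp only [Set.mem_sdiff, mem_edgeSet, adj_G, adj_T₁]
    decide
  have hdisjoint : ¬cyclesIntersect T₁ s(0, 2) s(0, 4) := by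
    rw [cyclesIntersect_iff_of_iso_hasse φ]
    decide
  have hpairwise : (G.edgeSet \ T₂.edgeSet).Pairwise (cyclesIntersect T₂) :=
    fun e he f hf _ ↦ cyclesIntersect_hasse_of_mem_fanGraph_sdiff he hf
  exact ⟨G, T₁, T₂, hle₁, hle₂, htree₁, htree₂, ⟨φ⟩,
    treeInterNum_lt_treeInterNum hle₁ hle₂ htree₁ htree₂ chord₂ chord₄ (by decide) hdisjoint
      hpairwise⟩

theorem stmt_15_general {α : Type*} [Preorder α] :
    ¬ ∃ f : (n : ℕ) → SimpleGraph (Fin n) → α,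
      (∀ (m n : ℕ) (T₁ : SimpleGraph (Fin m)) (T₂ : SimpleGraph (Fin n)),
        T₁.IsTree → T₂.IsTree → Nonempty (T₁ ≃g T₂) → f m T₁ = f n T₂) ∧
      (∀ (n : ℕ) (G T₁ T₂ : SimpleGraph (Fin n)), G.Connected →
        T₁ ≤ G → T₂ ≤ G → T₁.IsTree → T₂.IsTree →
        f n T₁ ≤ f n T₂ → treeInterNum G T₁ ≤ treeInterNum G T₂) := by
  rintro ⟨f, hiso, hmono⟩
  obtain ⟨G, T₁, T₂, hle₁, hle₂, htree₁, htree₂, φ, hlt⟩ :=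
    exists_iso_spanning_trees_treeInterNum_lt
  have heq : f 5 T₁ = f 5 T₂ := hiso 5 5 T₁ T₂ htree₁ htree₂ φ
  exact hlt.not_ge <|
    hmono 5 G T₂ T₁ (htree₁.connected.mono hle₁) hle₂ hle₁ htree₂ htree₁ heq.ge

/-- There is no intrinsic tree invariant `f` (a real-valued map on finite
trees, depending only on the isomorphism type of the tree) such that for every finite
connected simple graph `G` and all spanning trees `T₁, T₂` of `G`,
`f(T₁) ≤ f(T₂) ↔ ∩_G(T₁) ≤ ∩_G(T₂)`. -/
theorem stmt_15 :
    ¬ ∃ f : (n : ℕ) → SimpleGraph (Fin n) → ℝ,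
      (∀ (m n : ℕ) (T₁ : SimpleGraph (Fin m)) (T₂ : SimpleGraph (Fin n)),
        T₁.IsTree → T₂.IsTree → Nonempty (T₁ ≃g T₂) → f m T₁ = f n T₂) ∧
      (∀ (n : ℕ) (G T₁ T₂ : SimpleGraph (Fin n)), G.Connected →
        T₁ ≤ G → T₂ ≤ G → T₁.IsTree → T₂.IsTree →
        (f n T₁ ≤ f n T₂ ↔ treeInterNum G T₁ ≤ treeInterNum G T₂)) := by
  rintro ⟨f, hiso, hf⟩
  exact stmt_15_general ⟨f, hiso, fun n G T₁ T₂ hG hle₁ hle₂ htree₁ htree₂ ↦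
    (hf n G T₁ T₂ hG hle₁ hle₂ htree₁ htree₂).1⟩
end
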